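/- Let E be a complete real inner product space, K ⊆ E a nonempty closed convex set, and J : E → ℝ a differentiable function whose gradient ∇J is L-Lipschitz for some L ≥ 0. Let η > 0, θ ∈ K, and v ∈ E. Let θ⁺ ∈ K be the metric projection of θ + ηv onto K (i.e., θ⁺ ∈ K and ‖(θ+ηv) − θ⁺‖ ≤ ‖(θ+ηv) − y‖ for all y ∈ K) and let θ̄ ∈ K be the metric projection of θ + η∇J(θ) onto K. Define the gradient mapping G_η(θ) = (θ̄ − θ)/η. Then J(θ⁺) ≥ J(θ) − (3η/4)·‖∇J(θ) − v‖^2 + (η/8)·‖G_η(θ)‖^2 + (1/(4η) − L/2)·‖θ⁺ − θ‖^2. -/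

import Mathlib

/-!
Write `g = ∇J(θ)`, `a = θ⁺ - θ`, `b = θ̄ - θ` and `e = g - v`. The lower quadratic bound for
`L`-smooth functions (`quadratic_lower_bound`) gives `J(θ⁺) ≥ J(θ) + ⟪g, a⟫ - (L/2)‖a‖²`. The
variational inequality of the projection (`inner_sub_proj_nonpos`), tested at `θ ∈ K`, gives
`η⟪v, a⟫ ≥ ‖a‖²`, and Young's inequality gives `⟪e, a⟫ ≥ -(η/2)‖e‖² - ‖a‖²/(2η)`; together,
`⟪g, a⟫ ≥ ‖a‖²/(2η) - (η/2)‖e‖²`. Finally the projection is nonexpansive, so `‖b - a‖ ≤ η‖e‖` and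
`‖b‖² ≤ 2‖a‖² + 2η²‖e‖²`: half of the `‖a‖²` term and a further `(η/4)‖e‖²` pay for
`‖b‖²/(8η) = (η/8)‖G_η(θ)‖²`.
-/

open scoped RealInnerProductSpace

/-- Variational inequality for a nearest point `p` of a convex set `K` to `u`. -/
lemma inner_sub_proj_nonpos {E : Type*} [NormedAddCommGroup E] [InnerProductSpace ℝ E]
    {K : Set E} (hK : Convex ℝ K) {u p : E} (hp : p ∈ K) (hmin : ∀ y ∈ K, ‖u - p‖ ≤ ‖u - y‖) :
    ∀ w ∈ K, ⟪u - p, w - p⟫ ≤ 0 := by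
  refine (norm_eq_iInf_iff_real_inner_le_zero hK hp).1 (le_antisymm ?_ ?_)
  · have : Nonempty K := ⟨⟨p, hp⟩⟩
    exact le_ciInf fun y => hmin y y.2
  · exact ciInf_le ⟨0, by rintro _ ⟨y, rfl⟩; exact norm_nonneg _⟩ (⟨p, hp⟩ : K)

/-- Metric projections onto a convex set are nonexpansive. -/
lemma norm_proj_sub_proj_le {E : Type*} [NormedAddCommGroup E] [InnerProductSpace ℝ E]
    {K : Set E} (hK : Convex ℝ K) {u u' p p' : E} (hp : p ∈ K) (hp' : p' ∈ K)
    (hmin : ∀ y ∈ K, ‖u - p‖ ≤ ‖u - y‖) (hmin' : ∀ y ∈ K, ‖u' - p'‖ ≤ ‖u' - y‖) :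
    ‖p - p'‖ ≤ ‖u - u'‖ := by
  have h1 := inner_sub_proj_nonpos hK hp hmin p' hp'
  have h2 := inner_sub_proj_nonpos hK hp' hmin' p hp
  have h3 : ⟪u - u', p - p'⟫ - ‖p - p'‖ ^ 2 = -⟪u - p, p' - p⟫ - ⟪u' - p', p - p'⟫ := by
    rw [← real_inner_self_eq_norm_sq, ← inner_sub_left, ← neg_sub p p', inner_neg_right, neg_neg,
      ← inner_sub_left]
    congr 1
    abel
  have h4 := real_inner_le_norm (u - u') (p - p')
  by_contra! h
  nlinarith [norm_nonneg (u - u')]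

/-- The linearization of a function with `L`-Lipschitz gradient overestimates it by at most
`(L/2)‖y - x‖²`. -/
lemma quadratic_lower_bound {E : Type*} [NormedAddCommGroup E] [InnerProductSpace ℝ E]
    [CompleteSpace E] {J : E → ℝ} {J' : E → E} (hJ : ∀ x, HasGradientAt J (J' x) x)
    {L : ℝ} (hLip : ∀ x y, ‖J' x - J' y‖ ≤ L * ‖x - y‖) (x y : E) :
    J x + ⟪J' x, y - x⟫ - L / 2 * ‖y - x‖ ^ 2 ≤ J y := by
  set d := y - x with hd
  -- The gap to the quadratic minorant along the segment from `x` to `y` is nondecreasing.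
  have hder : ∀ t : ℝ, HasDerivAt
      (fun t : ℝ => J (x + t • d) - t * ⟪J' x, d⟫ + L / 2 * ‖d‖ ^ 2 * t ^ 2)
      (⟪J' (x + t • d) - J' x, d⟫ + L * ‖d‖ ^ 2 * t) t := by
    intro t
    have hline : HasDerivAt (fun t : ℝ => x + t • d) d t := by
      simpa using ((hasDerivAt_id t).smul_const d).const_add x
    have h1 : HasDerivAt (fun t : ℝ => J (x + t • d)) ⟪J' (x + t • d), d⟫ t := by
      exact ((hJ (x + t • d)).hasFDerivAt.comp_hasDerivAt t hline).congr_deriv (by simp)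
    have h2 := ((hasDerivAt_id t).mul_const ⟪J' x, d⟫)
    have h3 := ((hasDerivAt_id t).pow 2).const_mul (L / 2 * ‖d‖ ^ 2)
    refine ((h1.sub h2).add h3).congr_deriv ?_
    rw [inner_sub_left]
    simp
    ring
  have hmono := monotoneOn_of_hasDerivWithinAt_nonneg (convex_Icc (0 : ℝ) 1)
    (fun t _ => (hder t).continuousAt.continuousWithinAt)
    (fun t _ => (hder t).hasDerivWithinAt) (by
      intro t ht
      rw [interior_Icc] at ht
      have h1 : ‖J' (x + t • d) - J' x‖ ≤ L * (t * ‖d‖) := by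
        have := hLip (x + t • d) x
        rwa [add_sub_cancel_left, norm_smul, Real.norm_of_nonneg ht.1.le] at this
      have h2 := abs_le.1 (abs_real_inner_le_norm (J' (x + t • d) - J' x) d)
      nlinarith [h2.1, mul_le_mul_of_nonneg_right h1 (norm_nonneg d)])
  have h := hmono (Set.left_mem_Icc.2 zero_le_one) (Set.right_mem_Icc.2 zero_le_one) zero_le_one
  have hxy : x + d = y := by rw [hd]; abel
  simp [hxy] at h
  linarith

/-- The one-step descent inequality (B.6) for projected (stochastic) gradient ascent on an
`L`-smooth function `J` over a nonempty closed convex set `K`. -/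
theorem one_step_descent_inequality
    {E : Type*} [NormedAddCommGroup E] [InnerProductSpace ℝ E] [CompleteSpace E]
    (K : Set E) (hKne : K.Nonempty) (hKc : IsClosed K) (hKconv : Convex ℝ K)
    (J : E → ℝ) (J' : E → E) (hJ : ∀ x, HasGradientAt J (J' x) x)
    (L : ℝ) (hL : 0 ≤ L) (hLip : ∀ x y, ‖J' x - J' y‖ ≤ L * ‖x - y‖)
    (η : ℝ) (hη : 0 < η) (θ : E) (hθ : θ ∈ K) (v : E)
    (θp : E) (hθp : θp ∈ K) (hθpProj : ∀ y ∈ K, ‖θ + η • v - θp‖ ≤ ‖θ + η • v - y‖)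
    (θbar : E) (hθbar : θbar ∈ K)
    (hθbarProj : ∀ y ∈ K, ‖θ + η • J' θ - θbar‖ ≤ ‖θ + η • J' θ - y‖) :
    J θp ≥ J θ - 3 * η / 4 * ‖J' θ - v‖ ^ 2 + η / 8 * ‖η⁻¹ • (θbar - θ)‖ ^ 2 +
      (1 / (4 * η) - L / 2) * ‖θp - θ‖ ^ 2 := by
  have hdesc := quadratic_lower_bound hJ hLip θ θp
  have hvar : ‖θp - θ‖ ^ 2 ≤ η * ⟪v, θp - θ⟫ := by
    have h := inner_sub_proj_nonpos hKconv hθp hθpProj θ hθ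
    rw [show θ + η • v - θp = η • v - (θp - θ) by abel, ← neg_sub θp θ, inner_neg_right,
      inner_sub_left, real_inner_smul_left, real_inner_self_eq_norm_sq] at h
    linarith
  have hnonexp : ‖θbar - θp‖ ≤ η * ‖J' θ - v‖ := by
    have h := norm_proj_sub_proj_le hKconv hθbar hθp hθbarProj hθpProj
    rwa [add_sub_add_left_eq_sub, ← smul_sub, norm_smul, Real.norm_of_nonneg hη.le] at h
  have hbar : ‖θbar - θ‖ ^ 2 ≤ 2 * ‖θp - θ‖ ^ 2 + 2 * (η * ‖J' θ - v‖) ^ 2 := by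
    have h : ‖θbar - θ‖ ≤ ‖θp - θ‖ + η * ‖J' θ - v‖ := by
      linarith [norm_sub_le_norm_sub_add_norm_sub θbar θp θ]
    nlinarith [norm_nonneg (θbar - θ), sq_nonneg (‖θp - θ‖ - η * ‖J' θ - v‖)]
  have hsplit : ⟪J' θ, θp - θ⟫ = ⟪v, θp - θ⟫ + ⟪J' θ - v, θp - θ⟫ := by
    rw [inner_sub_left]; ring
  have hcs := (abs_le.1 (abs_real_inner_le_norm (J' θ - v) (θp - θ))).1
  rw [norm_smul, Real.norm_of_nonneg (inv_nonneg.2 hη.le)]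
  -- The claim multiplied by `8η`, with the smoothness terms removed.
  have hkey : 0 ≤ 8 * η * ⟪J' θ, θp - θ⟫ + 6 * (η * ‖J' θ - v‖) ^ 2 - ‖θbar - θ‖ ^ 2
      - 2 * ‖θp - θ‖ ^ 2 := by
    rw [hsplit]
    nlinarith [mul_le_mul_of_nonneg_left hcs hη.le, sq_nonneg (‖θp - θ‖ - η * ‖J' θ - v‖)]
  have hdiv := div_nonneg hkey (by positivity : 0 ≤ 8 * η)
  have heq : (8 * η * ⟪J' θ, θp - θ⟫ + 6 * (η * ‖J' θ - v‖) ^ 2 - ‖θbar - θ‖ ^ 2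
      - 2 * ‖θp - θ‖ ^ 2) / (8 * η) = ⟪J' θ, θp - θ⟫ + 3 * η / 4 * ‖J' θ - v‖ ^ 2
      - η / 8 * (η⁻¹ * ‖θbar - θ‖) ^ 2 - 1 / (4 * η) * ‖θp - θ‖ ^ 2 := by
    field_simp
    ring
  rw [heq] at hdiv
  linarith
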